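/- Let k be a positive integer, let δ be an integer with 0 ≤ δ < k, and let e ≥ 0 be an integer with 2δ ≤ 2^e. Set m = 2^e − δ (assumed positive). Then in the tensor product R(k,m) ⊗ R(k,m) over ZMod 2, the element (z_1·…·z_{k−δ})^{2^{e+1}−1} · z_{k−δ+1}^{2^{e+1}−2} · (z_{k−δ+2}·…·z_k)^{2^e−1} is nonzero, where z_i = x_i ⊗ 1 + 1 ⊗ x_i, and where a factor is omitted when its index range is empty (so for δ = 0 the claim is that (z_1·…·z_k)^{2^{e+1}−1} ≠ 0). -/

import Mathlib

/-!
Write `n = m + k = 2 ^ e + l` with `l = k - δ`, index the generators `x_0, …, x_{k-1}` from zero, and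
write `X_i = x_i ⊗ 1`, `Y_i = 1 ⊗ x_i`. The product of powers of the `z_i = X_i + Y_i` is shown to be
nonzero by multiplying it with a suitable element so as to obtain `T ⊗ T`, where
`T = ∏ x_i ^ (n - 1 - i)` is the top class of `R(k,m)`.

* `T ≠ 0` (`top_ne_zero`): the relation `h_{n-j}(x_0, …, x_j) = 0` is monic of degree `n - j` in
  `x_j`, so adjoining one root after another gives a ring in which all the relations hold and `T`
  survives (`exists_tower`). Hence `T ⊗ T ≠ 0`, the base being a field.
* Put `P_j = ∏_{i<j} x_i ^ (n - 1 - i)`. Then `P_j` kills `x_0, …, x_{j-1}`, so after multiplication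
  by `P_j` these variables may be dropped from the relations (`relation_top`); in particular
  `P_j x_j ^ (n - j) = 0`.
* All binomial coefficients of `2 ^ s - 1` are odd. So if `Q` kills `x ^ (d+1)` and `y ^ (d+1)` and
  `2 ^ s - 1 ≤ 2 d`, some monomial multiple of `Q (x + y) ^ (2 ^ s - 1)` is `Q x ^ d y ^ d`
  (`step_lemma`). This handles the variables with exponent `2 ^ (e+1) - 1` (for `j < l`) and those
  with exponent `2 ^ e - 1` (for `j > l`), one at a time.
* The exponent `2 ^ (e+1) - 2` at `j = l` is out of reach of that argument. For `δ > 0` the variables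
  `l - 1` and `l` are treated together, using the relation `h_q(x_{l-1}, x_l) = 0`, `q = 2 ^ e`:
  it turns `z_{l-1} ^ (2q-1) z_l ^ q` into `X_{l-1} ^ q Y_{l-1} ^ q (X_l ^ (q-1) + Y_l ^ (q-1))`,
  and multiplying by `X_l z_l ^ (q-2)` gives the required monomial (`critical_step`).
-/

open scoped TensorProduct

/-- Complete homogeneous symmetric polynomial of degree `d` in a list of elements
of a commutative (semi)ring: `h_d(l)`. -/
noncomputable def completeHomog {R : Type*} [CommSemiring R] : List R → ℕ → R
  | [], 0 => 1
  | [], _ + 1 => 0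
  | x :: l, d => ∑ t ∈ Finset.range (d + 1), x ^ t * completeHomog l (d - t)

/-- Elementary symmetric polynomial of degree `d` in a list of elements: `e_d(l)`. -/
noncomputable def elemSymm {R : Type*} [CommSemiring R] : List R → ℕ → R
  | _, 0 => 1
  | [], _ + 1 => 0
  | x :: l, d + 1 => elemSymm l (d + 1) + x * elemSymm l d

/-- The ideal of `(ZMod 2)[x_1, …, x_k]` generated by the complete homogeneous
symmetric polynomials `h_{m+i}(x_1, …, x_{k+1-i})` for `1 ≤ i ≤ k`. -/
noncomputable def flagIdeal (k m : ℕ) : Ideal (MvPolynomial (Fin k) (ZMod 2)) :=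
  Ideal.span { p | ∃ i : ℕ, 1 ≤ i ∧ i ≤ k ∧
    p = completeHomog (((List.finRange k).take (k + 1 - i)).map MvPolynomial.X) (m + i) }

/-- `R(k,m)`, the quotient of `(ZMod 2)[x_1, …, x_k]` by `flagIdeal k m`;
this is the mod-2 cohomology ring of the real flag manifold `F(1^k, m)`. -/
abbrev FlagRing (k m : ℕ) : Type :=
  MvPolynomial (Fin k) (ZMod 2) ⧸ flagIdeal k m

/-- The image of the variable `x_{j+1}` in `R(k,m)` (`j` is 0-indexed). -/
noncomputable def xGen (k m : ℕ) (j : Fin k) : FlagRing k m :=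
  Ideal.Quotient.mk (flagIdeal k m) (MvPolynomial.X j)

/-- The zero-divisor `z_{j+1} = x_{j+1} ⊗ 1 + 1 ⊗ x_{j+1}` in `R(k,m) ⊗ R(k,m)`. -/
noncomputable def zGen (k m : ℕ) (j : Fin k) :
    FlagRing k m ⊗[ZMod 2] FlagRing k m :=
  xGen k m j ⊗ₜ 1 + 1 ⊗ₜ xGen k m j

/-- `x_{i+1,j+1}` in the `s`-fold tensor power `R(k,m)^{⊗ s}`: the element having
`x_{j+1}` in the `(i+1)`-st tensor factor and `1` elsewhere (`i`, `j` 0-indexed). -/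
noncomputable def xT (k m s : ℕ) (i : Fin s) (j : Fin k) :
    ⨂[ZMod 2] _ : Fin s, FlagRing k m :=
  PiTensorProduct.tprod (ZMod 2) (fun t => if t = i then xGen k m j else 1)

/-- The `s`-th zero-divisor `z_{i+1,j+1} = x_{1,j+1} + x_{i+1,j+1}` in `R(k,m)^{⊗ s}`. -/
noncomputable def zT (k m s : ℕ) (hs : 0 < s) (i : Fin s) (j : Fin k) :
    ⨂[ZMod 2] _ : Fin s, FlagRing k m :=
  xT k m s ⟨0, hs⟩ j + xT k m s i j


/-! ### Complete homogeneous polynomials of lists -/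

/-- The generating function of the `h_d` is the product of the geometric series of the entries. -/
theorem coeff_homog {R : Type*} [CommSemiring R] (l : List R) (d : ℕ) :
    completeHomog l d =
      PowerSeries.coeff d (l.map fun x => PowerSeries.mk fun t => x ^ t).prod := by
  induction l generalizing d with
  | nil => cases d <;> simp [completeHomog, PowerSeries.coeff_one]
  | cons x l ih =>
    rw [List.map_cons, List.prod_cons, PowerSeries.coeff_mul,
      Finset.Nat.sum_antidiagonal_eq_sum_range_succ_mk, completeHomog]
    simp [ih]

/-- The defining recursion, with respect to the last entry of the list instead of the first. -/
theorem completeHomog_concat {R : Type*} [CommSemiring R] (l : List R) (x : R) (d : ℕ) :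
    completeHomog (l ++ [x]) d =
      ∑ t ∈ Finset.range (d + 1), x ^ t * completeHomog l (d - t) := by
  have h : completeHomog (l ++ [x]) d = completeHomog (x :: l) d := by
    rw [coeff_homog, coeff_homog]
    simp [mul_comm]
  rw [h, completeHomog]

theorem completeHomog_singleton {R : Type*} [CommSemiring R] (x : R) (d : ℕ) :
    completeHomog [x] d = x ^ d := by
  simp [coeff_homog]

theorem completeHomog_cons_succ {R : Type*} [CommSemiring R] (x : R) (l : List R) (d : ℕ) :
    completeHomog (x :: l) (d + 1) = completeHomog l (d + 1) + x * completeHomog (x :: l) d := by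
  rw [completeHomog, Finset.sum_range_succ', completeHomog, Finset.mul_sum, add_comm]
  simp [pow_succ', mul_assoc]

theorem map_completeHomog {R S : Type*} [CommSemiring R] [CommSemiring S] (f : R →+* S)
    (l : List R) (d : ℕ) : f (completeHomog l d) = completeHomog (l.map f) d := by
  induction l generalizing d with
  | nil => cases d <;> simp [completeHomog]
  | cons x l ih => simp [completeHomog, ih]

theorem completeHomog_zero {R : Type*} [CommSemiring R] (l : List R) :
    completeHomog l 0 = 1 := by
  induction l with
  | nil => rfl
  | cons x l ih => simp [completeHomog, ih]

/-- Variables annihilated by `P` may be dropped from `P * h_d`. -/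
theorem mul_completeHomog_append {R : Type*} [CommSemiring R] (P : R) (l l' : List R) (d : ℕ)
    (h : ∀ x ∈ l, P * x = 0) : P * completeHomog (l ++ l') d = P * completeHomog l' d := by
  induction l generalizing d with
  | nil => rfl
  | cons x l ih =>
    have hx : P * x = 0 := h x (by simp)
    rw [List.cons_append, completeHomog, Finset.mul_sum, Finset.sum_eq_single 0]
    · simpa using ih d fun y hy => h y (by simp [hy])
    · intro t _ ht
      obtain ⟨s, rfl⟩ := Nat.exists_eq_succ_of_ne_zero ht
      rw [pow_succ', ← mul_assoc, ← mul_assoc, hx, zero_mul, zero_mul]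
    · simp

/-! ### The top monomial -/

/-- Iterated adjunction of roots of the polynomials `h_{n-r}(x_0, …, x_{r-1}, X)`, which are monic of
degree `n - r`, produces an algebra satisfying the relations of the flag manifold in which the top
monomial is nonzero. -/
theorem exists_tower (n j : ℕ) (hj : j ≤ n) :
    ∃ (A : Type) (_ : CommRing A) (_ : Algebra (ZMod 2) A) (x : ℕ → A),
      (∀ r, r < j → completeHomog ((List.range (r + 1)).map x) (n - r) = 0) ∧
      ∏ i ∈ Finset.range j, x i ^ (n - 1 - i) ≠ 0 := by
  induction j with
  | zero => exact ⟨ZMod 2, inferInstance, inferInstance, 0, by simp, by simp⟩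
  | succ j ih =>
    obtain ⟨A, _, _, x, hrel, htop⟩ := ih (by omega)
    have hnt : Nontrivial A := ⟨_, _, htop⟩
    obtain ⟨d, hd⟩ : ∃ d, n - j = d + 1 := ⟨n - j - 1, by omega⟩
    set l := (List.range j).map x with hl
    let p : Polynomial A := completeHomog (l.map Polynomial.C ++ [Polynomial.X]) (d + 1)
    have hp : p = Polynomial.X ^ (d + 1) +
        ∑ t ∈ Finset.range (d + 1), Polynomial.X ^ t *
          Polynomial.C (completeHomog l (d + 1 - t)) := by
      simp only [p, completeHomog_concat, Finset.sum_range_succ _ (d + 1), ← map_completeHomog]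
      simp [completeHomog_zero, add_comm]
    have hdeg : (∑ t ∈ Finset.range (d + 1), Polynomial.X ^ t *
          Polynomial.C (completeHomog l (d + 1 - t))).degree < ((d + 1 : ℕ) : WithBot ℕ) := by
      refine (Polynomial.degree_sum_le _ _).trans_lt ?_
      rw [Finset.sup_lt_iff (by exact_mod_cast WithBot.bot_lt_coe _)]
      intro t ht
      rw [mul_comm]
      refine (Polynomial.degree_C_mul_X_pow_le _ _).trans_lt ?_
      exact_mod_cast Finset.mem_range.1 ht
    have hmonic : p.Monic := hp ▸ Polynomial.monic_X_pow_add hdeg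
    have hnat : p.natDegree = d + 1 := by
      rw [hp, Polynomial.natDegree_add_eq_left_of_degree_lt, Polynomial.natDegree_X_pow]
      simpa using hdeg
    let y : ℕ → AdjoinRoot p := fun i =>
      if i < j then AdjoinRoot.of p (x i) else AdjoinRoot.root p
    have hy : ∀ i, i < j → y i = AdjoinRoot.of p (x i) := fun i hi => if_pos hi
    have hyj : y j = AdjoinRoot.root p := if_neg (lt_irrefl j)
    have hmap : ∀ r, r ≤ j →
        (List.range r).map y = ((List.range r).map x).map (AdjoinRoot.of p) := by
      intro r hr
      rw [List.map_map]
      refine List.map_congr_left fun i hi => hy i ?_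
      have := List.mem_range.1 hi
      omega
    refine ⟨AdjoinRoot p, inferInstance, inferInstance, y, ?_, ?_⟩
    · intro r hr
      rcases Nat.lt_succ_iff_lt_or_eq.1 hr with h | rfl
      · rw [hmap _ h, ← map_completeHomog, hrel r h, map_zero]
      · have h0 : AdjoinRoot.mk p p = 0 := AdjoinRoot.mk_self
        rw [show AdjoinRoot.mk p p = AdjoinRoot.mk p
          (completeHomog (l.map Polynomial.C ++ [Polynomial.X]) (d + 1)) from rfl,
          map_completeHomog] at h0
        rw [List.range_succ, List.map_append, hmap _ le_rfl, hd, ← h0]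
        simp [hyj, hl, Function.comp_def]
    · rw [Finset.prod_range_succ, Finset.prod_congr rfl
        (fun i hi => by rw [hy i (Finset.mem_range.1 hi)]), hyj]
      simp only [← map_pow, ← map_prod]
      rw [← AdjoinRoot.mk_C, ← AdjoinRoot.mk_X, ← map_pow, ← map_mul, Ne,
        AdjoinRoot.mk_eq_zero]
      refine hmonic.not_dvd_of_natDegree_lt ?_ ?_
      · intro h
        have h' := congrArg (fun q => Polynomial.coeff q (n - 1 - j)) h
        rw [Polynomial.coeff_C_mul, Polynomial.coeff_X_pow_self, mul_one] at h'
        exact htop h'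
      · rw [hnat]
        exact (Polynomial.natDegree_C_mul_X_pow_le _ _).trans_lt (by omega)

/-- The partial top monomial `P_j = ∏_{i<j} x_i ^ (n - 1 - i)` kills the earlier variables, and hence
the complete homogeneous polynomials of the relations with these variables removed. -/
theorem relation_top {R : Type*} [CommSemiring R] {k n : ℕ} (x : ℕ → R)
    (hrel : ∀ r, r < k → completeHomog ((List.range (r + 1)).map x) (n - r) = 0)
    (hkn : k ≤ n) (j : ℕ) (hj : j ≤ k) :
    (∀ i < j, (∏ i ∈ Finset.range j, x i ^ (n - 1 - i)) * x i = 0) ∧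
    (∀ s, j + s < k → (∏ i ∈ Finset.range j, x i ^ (n - 1 - i)) *
      completeHomog ((List.range (s + 1)).map fun t => x (j + t)) (n - (j + s)) = 0) := by
  induction j with
  | zero => simpa using hrel
  | succ j ih =>
    obtain ⟨h1, h2⟩ := ih (by omega)
    have key : ∀ i < j + 1, (∏ i ∈ Finset.range (j + 1), x i ^ (n - 1 - i)) * x i = 0 := by
      intro i hi
      rw [Finset.prod_range_succ]
      rcases Nat.lt_succ_iff_lt_or_eq.1 hi with h | rfl
      · rw [mul_right_comm, h1 i h, zero_mul]
      · rw [mul_assoc, ← pow_succ]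
        have h0 := h2 0 (by omega)
        rw [show n - 1 - i + 1 = n - i by omega]
        simpa [completeHomog_singleton] using h0
    refine ⟨key, fun s hs => ?_⟩
    rw [← mul_completeHomog_append _ ((List.range (j + 1)).map x) _ _ (by simpa using key)]
    rw [show (List.range (j + 1)).map x ++ (List.range (s + 1)).map (fun t => x (j + 1 + t)) =
      (List.range (j + 1 + s + 1)).map x by
        rw [add_assoc (j + 1), List.range_add (n := j + 1)]; simp [Function.comp_def], hrel _ hs, mul_zero]

/-! ### Extracting monomials from powers of `x + y` -/

theorem mul_add_pow_of_mul_eq_zero {S : Type*} [CommSemiring S] {P x y : S} (h : P * y = 0)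
    (M : ℕ) : P * (x + y) ^ M = P * x ^ M := by
  induction M with
  | zero => simp
  | succ M ih =>
    rw [pow_succ, ← mul_assoc, ih, pow_succ, mul_add, mul_right_comm _ _ y, h]
    ring

/-- The binomial coefficients of `2 ^ s - 1` are odd. -/
theorem cast_choose {S : Type*} [CommRing S] [CharP S 2] (s a : ℕ)
    (ha : a ≤ 2 ^ s - 1) : (((2 ^ s - 1).choose a : ℕ) : S) = 1 := by
  have h2 : (2 : S) = 0 := by exact_mod_cast CharP.cast_eq_zero S 2
  induction a with
  | zero => simp
  | succ a ih =>
    have hc : (2 ^ s).choose (a + 1) = (2 ^ s - 1).choose a + (2 ^ s - 1).choose (a + 1) := by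
      conv_lhs => rw [show 2 ^ s = (2 ^ s - 1) + 1 by omega]
      exact Nat.choose_succ_succ _ _
    have hd : 2 ∣ (2 ^ s).choose (a + 1) :=
      Nat.Prime.dvd_choose_pow Nat.prime_two (by omega) (by omega)
    have hz : (((2 ^ s).choose (a + 1) : ℕ) : S) = 0 := (CharP.cast_eq_zero_iff S 2 _).2 hd
    rw [hc, Nat.cast_add, ih (by omega)] at hz
    linear_combination hz - h2

/-- One variable with exponent `2 ^ s - 1`: multiplying by the complementary monomial singles out one
term of the binomial expansion, all the others having an exponent larger than `d`. -/
theorem step_lemma {S : Type*} [CommRing S] [CharP S 2] (Q x y : S) (d s : ℕ)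
    (hx : Q * x ^ (d + 1) = 0) (hy : Q * y ^ (d + 1) = 0) (hN : 2 ^ s - 1 ≤ 2 * d) :
    ∃ c, c * (Q * (x + y) ^ (2 ^ s - 1)) = Q * (x ^ d * y ^ d) := by
  set N := 2 ^ s - 1 with hNdef
  set a := min d N with ha
  have hx' : ∀ t, d < t → Q * x ^ t = 0 := fun t ht => by
    rw [← Nat.add_sub_cancel' (Nat.succ_le_of_lt ht), pow_add, ← mul_assoc, hx, zero_mul]
  have hy' : ∀ t, d < t → Q * y ^ t = 0 := fun t ht => by
    rw [← Nat.add_sub_cancel' (Nat.succ_le_of_lt ht), pow_add, ← mul_assoc, hy, zero_mul]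
  refine ⟨x ^ (d - a) * y ^ (d - (N - a)), ?_⟩
  rw [add_pow, Finset.mul_sum, Finset.mul_sum, Finset.sum_eq_single a]
  · rw [cast_choose s a (by omega)]
    have e1 : x ^ d = x ^ (d - a) * x ^ a := by rw [← pow_add]; congr 1; omega
    have e2 : y ^ d = y ^ (d - (N - a)) * y ^ (N - a) := by rw [← pow_add]; congr 1; omega
    rw [e1, e2]; ring
  · intro t ht hta
    have ht' := Finset.mem_range.1 ht
    rcases lt_or_gt_of_ne hta with h | h
    · have := hy' (d - (N - a) + (N - t)) (by omega)
      rw [pow_add] at this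
      linear_combination (x ^ (d - a) * x ^ t * (N.choose t : S)) * this
    · have := hx' (d - a + t) (by omega)
      rw [pow_add] at this
      linear_combination (y ^ (d - (N - a)) * y ^ (N - t) * (N.choose t : S)) * this
  · intro h; exact absurd (Finset.mem_range.2 (by omega)) h

/-- Consequences of `h_{q+1}(u, v) = 0` (up to the factor `P`) after multiplication by `u ^ (q+1)`,
respectively `u ^ q`, when `u ^ (q+2)` is killed. -/
theorem half_lemma {S : Type*} [CommRing S] (P u v : S) (q : ℕ)
    (hu : P * u ^ (q + 2) = 0) (h : P * completeHomog [u, v] (q + 1) = 0) :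
    P * u ^ (q + 1) * v ^ (q + 1) = 0 ∧
    P * u ^ q * v ^ (q + 1) = - (P * u ^ (q + 1) * v ^ q) := by
  have h0 : P * u ^ (q + 1) * u = 0 := by rw [mul_assoc, ← pow_succ, hu]
  have h1 := fun d => mul_completeHomog_append (P * u ^ (q + 1)) [u] [v] d (by simpa using h0)
  simp only [List.singleton_append, completeHomog_singleton] at h1
  refine ⟨?_, ?_⟩
  · rw [← h1, mul_right_comm, h, zero_mul]
  · have h2 := h1 q
    rw [completeHomog_cons_succ, completeHomog_singleton] at h
    rw [← h2]
    linear_combination u ^ q * h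

/-- Two variables with exponents `2q - 1` and `2q - 2`, where `q = 2 ^ e = r + 2`, linked by the
relation `h_q = 0`. -/
theorem critical_step {S : Type*} [CommRing S] [CharP S 2] (Q x₁ y₁ x₂ y₂ : S) (e r : ℕ)
    (hr : 2 ^ e = r + 2)
    (hx₁ : Q * x₁ ^ (r + 3) = 0) (hy₁ : Q * y₁ ^ (r + 3) = 0)
    (hx : Q * completeHomog [x₁, x₂] (r + 2) = 0)
    (hy : Q * completeHomog [y₁, y₂] (r + 2) = 0) :
    x₂ * (Q * ((x₁ + y₁) ^ (2 ^ (e + 1) - 1) * (x₂ + y₂) ^ (2 ^ (e + 1) - 2))) =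
      Q * (x₁ ^ (r + 2) * y₁ ^ (r + 2)) * (x₂ ^ (r + 1) * y₂ ^ (r + 1)) := by
  have h2 : (2 : S) = 0 := by exact_mod_cast CharP.cast_eq_zero S 2
  have frob : ∀ a b : S, (a + b) ^ (r + 2) = a ^ (r + 2) + b ^ (r + 2) := fun a b => by
    rw [← hr]; exact add_pow_char_pow a b 2 e
  obtain ⟨ax, bx⟩ := half_lemma Q x₁ x₂ (r + 1) hx₁ hx
  obtain ⟨ay, byy⟩ := half_lemma Q y₁ y₂ (r + 1) hy₁ hy
  -- `Q z₁ ^ (2q - 1) = Q (x₁ ^ q y₁ ^ (q - 1) + x₁ ^ (q - 1) y₁ ^ q)` with `q = 2 ^ e`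
  have hz₁ : Q * (x₁ + y₁) ^ (r + 2 + (r + 1)) =
      Q * x₁ ^ (r + 2) * y₁ ^ (r + 1) + Q * y₁ ^ (r + 2) * x₁ ^ (r + 1) := by
    have ex := mul_add_pow_of_mul_eq_zero (P := Q * x₁ ^ (r + 2)) (x := y₁) (y := x₁)
      (by rw [mul_assoc, ← pow_succ, hx₁]) (r + 1)
    have ey := mul_add_pow_of_mul_eq_zero (P := Q * y₁ ^ (r + 2)) (x := x₁) (y := y₁)
      (by rw [mul_assoc, ← pow_succ, hy₁]) (r + 1)
    rw [pow_add, frob, ← ex, ← ey]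
    ring
  have hz₂ : Q * (x₁ + y₁) ^ (r + 2 + (r + 1)) * (x₂ + y₂) ^ (r + 2) =
      Q * (x₁ ^ (r + 2) * y₁ ^ (r + 2)) * (x₂ ^ (r + 1) + y₂ ^ (r + 1)) := by
    rw [hz₁, frob]
    linear_combination y₁ ^ (r + 1) * ax + x₁ ^ (r + 1) * ay + y₁ ^ (r + 2) * bx
      + x₁ ^ (r + 2) * byy
      - Q * x₁ ^ (r + 2) * y₁ ^ (r + 2) * (x₂ ^ (r + 1) + y₂ ^ (r + 1)) * h2
  have hz₃ := mul_add_pow_of_mul_eq_zero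
    (P := Q * (x₁ ^ (r + 2) * y₁ ^ (r + 2)) * y₂ ^ (r + 1)) (x := x₂) (y := y₂)
    (by linear_combination x₁ ^ (r + 2) * ay) r
  rw [show 2 ^ (e + 1) - 1 = r + 2 + (r + 1) by rw [pow_succ, hr]; omega,
    show 2 ^ (e + 1) - 2 = r + 2 + r by rw [pow_succ, hr]; omega, pow_add _ (r + 2) r]
  linear_combination x₂ * (x₂ + y₂) ^ r * hz₂ + x₂ * hz₃ + y₁ ^ (r + 2) * (x₂ + y₂) ^ r * ax

/-- Some multiple of the product of powers of the `z_i = X_i + Y_i` is the top monomial in the `X_i`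
and `Y_i`, for any two families satisfying the relations of the flag manifold. -/
theorem exists_mul_prod_eq_top {S : Type*} [CommRing S] [CharP S 2] (l δ e : ℕ) (hl : 0 < l)
    (he : 2 * δ ≤ 2 ^ e) (X Y : ℕ → S)
    (hX : ∀ r, r < l + δ → completeHomog ((List.range (r + 1)).map X) (2 ^ e + l - r) = 0)
    (hY : ∀ r, r < l + δ → completeHomog ((List.range (r + 1)).map Y) (2 ^ e + l - r) = 0)
    (N : ℕ → ℕ) (hN₁ : ∀ i, i < l → N i = 2 ^ (e + 1) - 1) (hN₂ : N l = 2 ^ (e + 1) - 2)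
    (hN₃ : ∀ i, l < i → N i = 2 ^ e - 1) :
    ∃ c, c * ∏ i ∈ Finset.range (l + δ), (X i + Y i) ^ N i =
      (∏ i ∈ Finset.range (l + δ), X i ^ (2 ^ e + l - 1 - i)) *
        ∏ i ∈ Finset.range (l + δ), Y i ^ (2 ^ e + l - 1 - i) := by
  have hpos : 0 < 2 ^ e := by positivity
  have hpe : 2 ^ (e + 1) = 2 ^ e * 2 := pow_succ 2 e
  set n := 2 ^ e + l with hn
  set PX : ℕ → S := fun j => ∏ i ∈ Finset.range j, X i ^ (n - 1 - i) with hPX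
  set PY : ℕ → S := fun j => ∏ i ∈ Finset.range j, Y i ^ (n - 1 - i) with hPY
  have PXs : ∀ j, PX (j + 1) = PX j * X j ^ (n - 1 - j) := fun j => Finset.prod_range_succ _ _
  have PYs : ∀ j, PY (j + 1) = PY j * Y j ^ (n - 1 - j) := fun j => Finset.prod_range_succ _ _
  have rX := fun j hj => (relation_top X hX (by omega) j hj).2
  have rY := fun j hj => (relation_top Y hY (by omega) j hj).2
  have rX0 : ∀ j, j < l + δ → PX j * X j ^ (n - 1 - j + 1) = 0 := fun j hj => by
    rw [show n - 1 - j + 1 = n - j by omega]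
    simpa [completeHomog_singleton] using rX j hj.le 0 hj
  have rY0 : ∀ j, j < l + δ → PY j * Y j ^ (n - 1 - j + 1) = 0 := fun j hj => by
    rw [show n - 1 - j + 1 = n - j by omega]
    simpa [completeHomog_singleton] using rY j hj.le 0 hj
  -- the induction step for a single variable whose exponent is `2 ^ s - 1`
  have step : ∀ j s, j < l + δ → N j = 2 ^ s - 1 → 2 ^ s - 1 ≤ 2 * (n - 1 - j) →
      (∃ c, c * ∏ i ∈ Finset.range j, (X i + Y i) ^ N i = PX j * PY j) →
      ∃ c, c * ∏ i ∈ Finset.range (j + 1), (X i + Y i) ^ N i = PX (j + 1) * PY (j + 1) := by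
    rintro j s hj hNj hs ⟨c, hc⟩
    obtain ⟨c', hc'⟩ := step_lemma (PX j * PY j) (X j) (Y j) (n - 1 - j) s
      (by rw [mul_right_comm, rX0 j hj, zero_mul]) (by rw [mul_assoc, rY0 j hj, mul_zero]) hs
    refine ⟨c' * c, ?_⟩
    rw [Finset.prod_range_succ, PXs, PYs, hNj]
    linear_combination c' * (X j + Y j) ^ (2 ^ s - 1) * hc + hc'
  have first : ∀ j, j ≤ l →
      ∃ c, c * ∏ i ∈ Finset.range j, (X i + Y i) ^ N i = PX j * PY j := by
    intro j hj
    induction j with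
    | zero => exact ⟨1, by simp [hPX, hPY]⟩
    | succ j ih => exact step j (e + 1) (by omega) (hN₁ j hj) (by omega) (ih (by omega))
  rcases Nat.eq_zero_or_pos δ with rfl | hδ
  · exact first l le_rfl
  obtain ⟨l, rfl⟩ : ∃ l', l = l' + 1 := ⟨l - 1, by omega⟩
  have second : ∃ c, c * ∏ i ∈ Finset.range (l + 2), (X i + Y i) ^ N i =
      PX (l + 2) * PY (l + 2) := by
    obtain ⟨c, hc⟩ := first l (by omega)
    obtain ⟨r, hr⟩ : ∃ r, 2 ^ e = r + 2 := ⟨2 ^ e - 2, by omega⟩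
    have d1 : n - 1 - l = r + 2 := by omega
    have d2 : n - 1 - (l + 1) = r + 1 := by omega
    have gX := rX0 l (by omega)
    have gY := rY0 l (by omega)
    have kX := rX l (by omega) 1 (by omega)
    have kY := rY l (by omega) 1 (by omega)
    rw [d1] at gX gY
    rw [show n - (l + 1) = r + 2 by omega] at kX kY
    have h := critical_step (PX l * PY l) (X l) (Y l) (X (l + 1)) (Y (l + 1)) e r hr
      (by rw [mul_right_comm, gX, zero_mul]) (by rw [mul_assoc, gY, mul_zero])
      (by rw [mul_right_comm]; exact mul_eq_zero_of_left kX _)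
      (by rw [mul_assoc]; exact mul_eq_zero_of_right _ kY)
    refine ⟨X (l + 1) * c, ?_⟩
    rw [Finset.prod_range_succ, Finset.prod_range_succ, PXs, PYs, PXs, PYs, hN₂,
      hN₁ l (by omega), d1, d2]
    linear_combination X (l + 1) * (X l + Y l) ^ (2 ^ (e + 1) - 1) *
      (X (l + 1) + Y (l + 1)) ^ (2 ^ (e + 1) - 2) * hc + h
  have third : ∀ t, t + 1 ≤ δ → ∃ c, c * ∏ i ∈ Finset.range (l + 2 + t), (X i + Y i) ^ N i =
      PX (l + 2 + t) * PY (l + 2 + t) := by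
    intro t ht
    induction t with
    | zero => exact second
    | succ t ih =>
      exact step (l + 2 + t) e (by omega) (hN₃ _ (by omega)) (by omega) (ih (by omega))
  have := third (δ - 1) (by omega)
  rwa [show l + 2 + (δ - 1) = l + 1 + δ by omega] at this

/-! ### The flag ring -/

/-- The generator `x_{i+1}` of `R(k,m)`, extended by `0` to all natural indices. -/
noncomputable def xNat (k m i : ℕ) : FlagRing k m :=
  if h : i < k then xGen k m ⟨i, h⟩ else 0

theorem take_finRange_map {α : Type*} (k r : ℕ) (hr : r ≤ k) (f : ℕ → α) :
    ((List.finRange k).take r).map (fun i => f i.val) = (List.range r).map f := by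
  have h : ((List.finRange k).take r).map Fin.val = List.range r := by
    rw [List.map_take, List.map_coe_finRange_eq_range, List.take_range, min_eq_left hr]
  rw [← h, List.map_map]
  rfl

theorem xNat_relation (k m r : ℕ) (hr : r < k) :
    completeHomog ((List.range (r + 1)).map (xNat k m)) (m + k - r) = 0 := by
  have hmem : completeHomog (((List.finRange k).take (r + 1)).map MvPolynomial.X) (m + k - r) ∈
      flagIdeal k m := by
    refine Ideal.subset_span ⟨k - r, by omega, by omega, ?_⟩
    rw [show k + 1 - (k - r) = r + 1 by omega, show m + (k - r) = m + k - r by omega]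
  have h := Ideal.Quotient.eq_zero_iff_mem.2 hmem
  rw [map_completeHomog, List.map_map] at h
  rw [← take_finRange_map k (r + 1) hr, ← h]
  congr 2
  funext i
  simp [xNat, xGen]

theorem top_ne_zero (k m : ℕ) :
    ∏ i ∈ Finset.range k, xNat k m i ^ (m + k - 1 - i) ≠ 0 := by
  obtain ⟨A, _, _, x, hrel, htop⟩ := exists_tower (m + k) k (by omega)
  let φ : MvPolynomial (Fin k) (ZMod 2) →+* A :=
    (MvPolynomial.aeval (fun i : Fin k => x i) : _ →ₐ[ZMod 2] A).toRingHom
  have hφX : ∀ i : Fin k, φ (MvPolynomial.X i) = x i := fun i => MvPolynomial.aeval_X _ i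
  have hφ : ∀ p ∈ flagIdeal k m, φ p = 0 := by
    intro p hp
    have hle : flagIdeal k m ≤ RingHom.ker φ := by
      refine Ideal.span_le.2 ?_
      rintro _ ⟨i, h1, h2, rfl⟩
      rw [SetLike.mem_coe, RingHom.mem_ker, map_completeHomog, List.map_map]
      have h := hrel (k - i) (by omega)
      rw [show m + k - (k - i) = m + i by omega, show k - i + 1 = k + 1 - i by omega,
        ← take_finRange_map k _ (by omega)] at h
      rw [← h]
      congr 2
      funext i
      exact hφX i
    exact hle hp
  let ψ : FlagRing k m →+* A := Ideal.Quotient.lift (flagIdeal k m) φ hφ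
  intro h0
  refine htop ?_
  rw [← map_zero ψ, ← h0, map_prod]
  refine Finset.prod_congr rfl fun i hi => ?_
  have hi' := Finset.mem_range.1 hi
  rw [map_pow, xNat, dif_pos hi', xGen, Ideal.Quotient.lift_mk, hφX]

theorem tmul_self_ne_zero {K V : Type*} [Field K] [AddCommGroup V] [Module K V] {v : V}
    (hv : v ≠ 0) : v ⊗ₜ[K] v ≠ 0 := by
  obtain ⟨φ, hφ⟩ : ∃ φ : Module.Dual K V, φ v ≠ 0 := by
    by_contra! h
    exact hv ((Module.forall_dual_apply_eq_zero_iff K v).1 h)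
  intro h
  have h' := congrArg (LinearMap.mul' K K ∘ₗ TensorProduct.map φ φ) h
  simp [hφ] at h'

/-- for `0 ≤ δ < k`, `2δ ≤ 2^e` and `m = 2^e - δ > 0`,
`(z_1 ⋯ z_{k-δ})^{2^{e+1}-1} · z_{k-δ+1}^{2^{e+1}-2} · (z_{k-δ+2} ⋯ z_k)^{2^e-1} ≠ 0`
in `R(k,m) ⊗ R(k,m)` (a factor being omitted — here: an empty product — when its
index range is empty, e.g. for `δ = 0`). -/
theorem statement12 (k δ e : ℕ) (hk : 0 < k) (hδ : δ < k) (he : 2 * δ ≤ 2 ^ e)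
    (hm : 0 < 2 ^ e - δ) :
    (∏ j ∈ Finset.univ.filter (fun j : Fin k => j.val < k - δ),
        zGen k (2 ^ e - δ) j) ^ (2 ^ (e + 1) - 1) *
      (∏ j ∈ Finset.univ.filter (fun j : Fin k => j.val = k - δ),
        zGen k (2 ^ e - δ) j) ^ (2 ^ (e + 1) - 2) *
      (∏ j ∈ Finset.univ.filter (fun j : Fin k => k - δ < j.val),
        zGen k (2 ^ e - δ) j) ^ (2 ^ e - 1) ≠ 0 := by
  obtain ⟨l, rfl⟩ : ∃ l, k = l + δ := ⟨k - δ, by omega⟩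
  have hl : 0 < l := by omega
  simp only [Nat.add_sub_cancel]
  set k := l + δ with hk'
  set m := 2 ^ e - δ with hm'
  have hmk : m + k = 2 ^ e + l := by omega
  let X : ℕ → FlagRing k m ⊗[ZMod 2] FlagRing k m := fun i => xNat k m i ⊗ₜ 1
  let Y : ℕ → FlagRing k m ⊗[ZMod 2] FlagRing k m := fun i => 1 ⊗ₜ xNat k m i
  let f : FlagRing k m →+* FlagRing k m ⊗[ZMod 2] FlagRing k m :=
    Algebra.TensorProduct.includeLeftRingHom
  let g : FlagRing k m →+* FlagRing k m ⊗[ZMod 2] FlagRing k m :=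
    (Algebra.TensorProduct.includeRight :
      FlagRing k m →ₐ[ZMod 2] FlagRing k m ⊗[ZMod 2] FlagRing k m).toRingHom
  have hX : ∀ r, r < k → completeHomog ((List.range (r + 1)).map X) (2 ^ e + l - r) = 0 := by
    intro r hr
    have h := (map_completeHomog (R := FlagRing k m)
      (S := FlagRing k m ⊗[ZMod 2] FlagRing k m) f _ _).symm.trans
      ((congrArg f (xNat_relation k m r hr)).trans (map_zero f))
    rwa [List.map_map, hmk] at h
  have hY : ∀ r, r < k → completeHomog ((List.range (r + 1)).map Y) (2 ^ e + l - r) = 0 := by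
    intro r hr
    have h := (map_completeHomog (R := FlagRing k m)
      (S := FlagRing k m ⊗[ZMod 2] FlagRing k m) g _ _).symm.trans
      ((congrArg g (xNat_relation k m r hr)).trans (map_zero g))
    rwa [List.map_map, hmk] at h
  have htop : (∏ i ∈ Finset.range k, X i ^ (2 ^ e + l - 1 - i)) *
        ∏ i ∈ Finset.range k, Y i ^ (2 ^ e + l - 1 - i) ≠ 0 := by
    have hT := top_ne_zero k m
    rw [hmk] at hT
    have eX : ∏ i ∈ Finset.range k, X i ^ (2 ^ e + l - 1 - i) =
        f (∏ i ∈ Finset.range k, xNat k m i ^ (2 ^ e + l - 1 - i)) := by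
      rw [map_prod]; simp only [map_pow]; rfl
    have eY : ∏ i ∈ Finset.range k, Y i ^ (2 ^ e + l - 1 - i) =
        g (∏ i ∈ Finset.range k, xNat k m i ^ (2 ^ e + l - 1 - i)) := by
      rw [map_prod]; simp only [map_pow]; rfl
    rw [eX, eY]
    generalize ∏ i ∈ Finset.range k, xNat k m i ^ (2 ^ e + l - 1 - i) = T at hT
    change (T ⊗ₜ[ZMod 2] (1 : FlagRing k m)) * ((1 : FlagRing k m) ⊗ₜ[ZMod 2] T) ≠ 0
    rw [Algebra.TensorProduct.tmul_mul_tmul, mul_one, one_mul]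
    exact tmul_self_ne_zero hT
  have : Nontrivial (FlagRing k m ⊗[ZMod 2] FlagRing k m) := ⟨_, _, htop⟩
  have : CharP (FlagRing k m ⊗[ZMod 2] FlagRing k m) 2 :=
    charP_of_injective_algebraMap (algebraMap (ZMod 2) _).injective 2
  let N : ℕ → ℕ := fun i =>
    if i < l then 2 ^ (e + 1) - 1 else if i = l then 2 ^ (e + 1) - 2 else 2 ^ e - 1
  obtain ⟨c, hc⟩ := exists_mul_prod_eq_top l δ e hl he X Y hX hY N
    (fun i hi => if_pos hi) (by simp [N])
    (fun i hi => by simp only [N]; rw [if_neg (by omega), if_neg (by omega)])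
  intro h0
  refine htop ?_
  rw [← hc]
  refine mul_eq_zero_of_right c ?_
  rw [← h0, Finset.prod_range, ← Finset.prod_pow, ← Finset.prod_pow, ← Finset.prod_pow,
    Finset.prod_filter, Finset.prod_filter, Finset.prod_filter, ← Finset.prod_mul_distrib,
    ← Finset.prod_mul_distrib]
  refine Finset.prod_congr rfl fun i _ => ?_
  have hz : X i + Y i = zGen k m i := by
    have hi : i.val < k := i.isLt
    simp [X, Y, zGen, xNat, hi]
  rw [hz]
  rcases lt_trichotomy i.val l with h | h | h
  · simp [N, h, h.ne, h.not_gt]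
  · simp [N, h]
  · simp [N, h, h.ne', h.not_gt]
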